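/- Let H, K be complex Hilbert spaces and let 𝓑 denote the open unit ball of B(K,H). For A ∈ 𝓑 define η(Z) = (I − AA*)^{−1/2}(Z + A)(I + A*Z)⁻¹(I − A*A)^{1/2} for Z ∈ 𝓑. Then η maps 𝓑 bijectively onto 𝓑 and its inverse is given by η⁻¹(Z) = (I − AA*)^{−1/2}(Z − A)(I − A*Z)⁻¹(I − A*A)^{1/2}. -/

import Mathlib

open ContinuousLinearMap

section helpers
variable {H K : Type*} [NormedAddCommGroup H] [InnerProductSpace ℂ H] [CompleteSpace H]
    [NormedAddCommGroup K] [InnerProductSpace ℂ K] [CompleteSpace K]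

lemma mobius_aux_unitQ (A : K →L[ℂ] H) (hA : ‖A‖ < 1) (Q : K →L[ℂ] K)
    (hQ2 : Q ∘L Q = 1 - adjoint A ∘L A) : IsUnit Q := by
  have h1 : IsUnit (1 - adjoint A ∘L A) := by
    apply isUnit_one_sub_of_norm_lt_one
    calc ‖adjoint A ∘L A‖ ≤ ‖adjoint A‖ * ‖A‖ := opNorm_comp_le _ _
      _ = ‖A‖ * ‖A‖ := by rw [LinearIsometryEquiv.norm_map]
      _ < 1 := by nlinarith [norm_nonneg A]
  rw [← hQ2] at h1
  have h2 : IsUnit (Q * Q) := h1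
  exact ((Commute.refl Q).isUnit_mul_iff.mp h2).1

lemma mobius_aux_unitW (A : K →L[ℂ] H) (hA : ‖A‖ < 1) (Z : K →L[ℂ] H) (hZ : ‖Z‖ < 1) :
    IsUnit (1 + adjoint A ∘L Z) := by
  have := isUnit_one_sub_of_norm_lt_one (x := -(adjoint A ∘L Z)) (by
    rw [norm_neg]
    calc ‖adjoint A ∘L Z‖ ≤ ‖adjoint A‖ * ‖Z‖ := opNorm_comp_le _ _
      _ = ‖A‖ * ‖Z‖ := by rw [LinearIsometryEquiv.norm_map]
      _ < 1 := by nlinarith [norm_nonneg A, norm_nonneg Z])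
  rwa [sub_neg_eq_add] at this

lemma mobius_aux_comm (A : K →L[ℂ] H) (hA : ‖A‖ < 1)
    (P : H →L[ℂ] H) (hP : P.IsPositive) (hP2 : P ∘L P = 1 - A ∘L adjoint A)
    (Q : K →L[ℂ] K) (hQ : Q.IsPositive) (hQ2 : Q ∘L Q = 1 - adjoint A ∘L A) :
    A ∘L Q = P ∘L A := by
  have hU := mobius_aux_unitQ A hA Q hQ2
  obtain ⟨X, hX⟩ : ∃ X, X = A ∘L Q - P ∘L A := ⟨_, rfl⟩
  have e : P ∘L X = -(X ∘L Q) := by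
    have e1 : P ∘L X + X ∘L Q = 0 := by
      have : P ∘L X + X ∘L Q = A ∘L (Q ∘L Q) - (P ∘L P) ∘L A := by
        subst hX; ext x; simp
      rw [this, hP2, hQ2]; ext x; simp
    exact eq_neg_of_add_eq_zero_left e1
  have pos1 : (adjoint X ∘L P ∘L X).IsPositive := hP.adjoint_conj X
  have e2 : adjoint X ∘L P ∘L X = -((adjoint X ∘L X) * Q) := by
    rw [e]; ext x; simp
  have posS : (adjoint X ∘L X).IsPositive := by
    have := (isPositive_one (𝕜 := ℂ) (E := H)).adjoint_conj X
    simpa [one_def] using this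
  rw [e2] at pos1
  have sa : IsSelfAdjoint ((adjoint X ∘L X) * Q) := by
    simpa using pos1.isSelfAdjoint.neg
  have cm : Commute (adjoint X ∘L X) Q :=
    (posS.isSelfAdjoint.commute_iff hQ.isSelfAdjoint).2 sa
  have n1 : 0 ≤ (adjoint X ∘L X) * Q :=
    Commute.mul_nonneg ((nonneg_iff_isPositive _).2 posS) ((nonneg_iff_isPositive _).2 hQ) cm
  have n2 : (adjoint X ∘L X) * Q ≤ 0 := by
    have := (nonneg_iff_isPositive _).2 pos1
    exact neg_nonneg.mp this
  have z : (adjoint X ∘L X) * Q = 0 := le_antisymm n2 n1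
  have z2 : adjoint X ∘L X = 0 := (hU.mul_left_eq_zero).1 z
  have z3 : X = 0 := by
    have := norm_adjoint_comp_self X
    rw [z2, norm_zero] at this
    exact norm_eq_zero.1 (mul_self_eq_zero.1 this.symm)
  rw [hX] at z3
  exact sub_eq_zero.1 z3

lemma mobius_aux_main (A : K →L[ℂ] H) (hA : ‖A‖ < 1)
    (P Pinv : H →L[ℂ] H) (hP : P.IsPositive) (hP2 : P ∘L P = 1 - A ∘L adjoint A)
    (hPinv₁ : P ∘L Pinv = 1) (hPinv₂ : Pinv ∘L P = 1)
    (Q : K →L[ℂ] K) (hQ : Q.IsPositive) (hQ2 : Q ∘L Q = 1 - adjoint A ∘L A)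
    (Z : K →L[ℂ] H) (hZ : ‖Z‖ < 1) :
    ‖Pinv ∘L (Z + A) ∘L Ring.inverse (1 + adjoint A ∘L Z) ∘L Q‖ < 1 ∧
    Pinv ∘L ((Pinv ∘L (Z + A) ∘L Ring.inverse (1 + adjoint A ∘L Z) ∘L Q) - A) ∘L
            Ring.inverse (1 - adjoint A ∘L
              (Pinv ∘L (Z + A) ∘L Ring.inverse (1 + adjoint A ∘L Z) ∘L Q)) ∘L Q = Z := by
  have hU := mobius_aux_unitQ A hA Q hQ2
  have hW := mobius_aux_unitW A hA Z hZ
  have hc := mobius_aux_comm A hA P hP hP2 Q hQ hQ2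
  have hcx : ∀ x, A (Q x) = P (A x) := fun x => congrArg (fun f => f x) hc
  have pa : adjoint P = P := hP.isSelfAdjoint.adjoint_eq
  have qa : adjoint Q = Q := hQ.isSelfAdjoint.adjoint_eq
  have hcs : Q ∘L adjoint A = adjoint A ∘L P := by
    have := congrArg adjoint hc
    rwa [adjoint_comp, adjoint_comp, pa, qa] at this
  have hcsx : ∀ x, Q (adjoint A x) = adjoint A (P x) := fun x => congrArg (fun f => f x) hcs
  have hP2x : ∀ x, P (P x) = x - A (adjoint A x) := fun x => congrArg (fun f => f x) hP2
  have hQ2x : ∀ x, Q (Q x) = x - adjoint A (A x) := fun x => congrArg (fun f => f x) hQ2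
  have hp2x : ∀ x, Pinv (P x) = x := fun x => congrArg (fun f => f x) hPinv₂
  obtain ⟨W, hWd⟩ : ∃ W, W = Ring.inverse (1 + adjoint A ∘L Z) := ⟨_, rfl⟩
  have hW1 : (1 + adjoint A ∘L Z) * W = 1 := by rw [hWd]; exact Ring.mul_inverse_cancel _ hW
  have hW2 : W * (1 + adjoint A ∘L Z) = 1 := by rw [hWd]; exact Ring.inverse_mul_cancel _ hW
  have hW1x : ∀ x, W x + adjoint A (Z (W x)) = x := fun x => congrArg (fun f => f x) hW1
  rw [← hWd]
  obtain ⟨T, hT⟩ : ∃ T, T = Pinv ∘L (Z + A) ∘L W ∘L Q := ⟨_, rfl⟩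
  rw [← hT]
  have hTx : ∀ x, T x = A x + P (Z (W (Q x))) := by
    intro x
    have h1 : P (A x + P (Z (W (Q x)))) = Z (W (Q x)) + A (W (Q x)) := by
      rw [map_add, hP2x, ← hcx]
      have h2 := congrArg A (hW1x (Q x))
      rw [map_add] at h2
      rw [← h2]; abel
    rw [← hp2x (A x + _), h1, hT]; simp
  constructor
  · -- norm estimate
    have key : ∀ x, ‖T x‖ ^ 2 + ‖W (Q x)‖ ^ 2 = ‖x‖ ^ 2 + ‖Z (W (Q x))‖ ^ 2 := by
      intro x
      have hy : W (Q x) = Q x - adjoint A (Z (W (Q x))) := eq_sub_of_add_eq (hW1x (Q x))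
      rw [hTx]
      generalize Z (W (Q x)) = z at *
      rw [hy, norm_add_sq (𝕜 := ℂ), norm_sub_sq (𝕜 := ℂ)]
      have c1 : inner ℂ (Q x) (adjoint A z) = inner ℂ (A x) (P z) := by
        rw [adjoint_inner_right, hcx, ← adjoint_inner_right P, pa]
      have c2 : ‖P z‖ ^ 2 = ‖z‖ ^ 2 - ‖adjoint A z‖ ^ 2 := by
        rw [← inner_self_eq_norm_sq (𝕜 := ℂ), ← inner_self_eq_norm_sq (𝕜 := ℂ) z,
          ← inner_self_eq_norm_sq (𝕜 := ℂ) (adjoint A z), ← adjoint_inner_right P, pa, hP2x,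
          inner_sub_right, adjoint_inner_left, map_sub]
      have c3 : ‖Q x‖ ^ 2 = ‖x‖ ^ 2 - ‖A x‖ ^ 2 := by
        rw [← inner_self_eq_norm_sq (𝕜 := ℂ), ← inner_self_eq_norm_sq (𝕜 := ℂ) x,
          ← inner_self_eq_norm_sq (𝕜 := ℂ) (A x), ← adjoint_inner_right Q, qa, hQ2x,
          inner_sub_right, adjoint_inner_right, map_sub]
      rw [c1, c2, c3]; ring
    have hWQ : IsUnit (W * Q) := IsUnit.mul ⟨⟨W, _, hW2, hW1⟩, rfl⟩ hU
    obtain ⟨M, hM0, hM⟩ : ∃ M : ℝ, 1 ≤ M ∧ ∀ x, ‖x‖ ≤ M * ‖W (Q x)‖ := by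
      obtain ⟨V, hV⟩ : ∃ V, V * (W * Q) = 1 := hWQ.exists_left_inv
      refine ⟨max 1 ‖V‖, le_max_left _ _, fun x => ?_⟩
      have : V (W (Q x)) = x := congrArg (fun f => f x) hV
      calc ‖x‖ = ‖V (W (Q x))‖ := by rw [this]
        _ ≤ ‖V‖ * ‖W (Q x)‖ := V.le_opNorm _
        _ ≤ _ := by gcongr; exact le_max_right _ _
    obtain ⟨c, hcd⟩ : ∃ c, c = 1 - (1 - ‖Z‖ ^ 2) / M ^ 2 := ⟨_, rfl⟩
    have hz2 : 0 < 1 - ‖Z‖ ^ 2 := by nlinarith [norm_nonneg Z]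
    have hc1 : c < 1 := by
      have : 0 < (1 - ‖Z‖ ^ 2) / M ^ 2 := by positivity
      linarith
    have hc0 : 0 ≤ c := by
      have : (1 - ‖Z‖ ^ 2) / M ^ 2 ≤ 1 := by
        rw [div_le_one (by positivity)]; nlinarith [norm_nonneg Z]
      linarith
    have hb : ‖T‖ ≤ Real.sqrt c := by
      refine T.opNorm_le_bound (Real.sqrt_nonneg _) fun x => ?_
      apply le_of_sq_le_sq _ (by positivity)
      rw [mul_pow, Real.sq_sqrt hc0]
      have h1 := key x
      have h2 : ‖Z (W (Q x))‖ ^ 2 ≤ ‖Z‖ ^ 2 * ‖W (Q x)‖ ^ 2 := by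
        rw [← mul_pow]; gcongr; exact Z.le_opNorm _
      have h3 : ‖x‖ ^ 2 / M ^ 2 ≤ ‖W (Q x)‖ ^ 2 := by
        rw [div_le_iff₀ (by positivity), mul_comm, ← mul_pow]; gcongr; exact hM x
      have h4 := mul_le_mul_of_nonneg_left h3 hz2.le
      have h5 : c * ‖x‖ ^ 2 = ‖x‖ ^ 2 - (1 - ‖Z‖ ^ 2) * (‖x‖ ^ 2 / M ^ 2) := by
        rw [hcd]; ring
      rw [h5]; linarith
    refine hb.trans_lt ?_
    rw [Real.sqrt_lt' one_pos]; simpa using hc1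
  · have e1 : 1 - adjoint A ∘L T = Q * W * Q := by
      ext x
      have : (1 - adjoint A ∘L T) x = x - adjoint A (T x) := rfl
      rw [this, hTx, map_add, ← hcsx]
      change _ = Q (W (Q x))
      have h2 := congrArg Q (hW1x (Q x))
      rw [map_add, hQ2x] at h2
      rw [eq_sub_of_add_eq h2]; abel
    have hWu : IsUnit W := ⟨⟨W, _, hW2, hW1⟩, rfl⟩
    have hun : IsUnit (Q * W * Q) := (hU.mul hWu).mul hU
    have e2 : T - A = P ∘L Z ∘L W ∘L Q := by
      ext x; simp [hTx]
    rw [e1, e2]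
    have e3 : W * Q * Ring.inverse (Q * W * Q) * Q = 1 := by
      have h := Ring.mul_inverse_cancel _ hun
      have h' : Q * (W * Q * Ring.inverse (Q * W * Q) * Q) = Q * 1 := by
        rw [mul_one]
        calc _ = (Q * W * Q * Ring.inverse (Q * W * Q)) * Q := by simp only [mul_assoc]
          _ = Q := by rw [h, one_mul]
      exact hU.mul_left_cancel h'
    ext x
    have e3x : W (Q (Ring.inverse (Q * W * Q) (Q x))) = x := congrArg (fun f => f x) e3
    simp only [comp_apply, hp2x]
    rw [e3x]

end helpers

/-- Let `𝓑` be the open unit ball of `B(K,H)` and `A ∈ 𝓑`. With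
`P = (I − AA*)^{1/2}` (with inverse `Pinv = (I − AA*)^{−1/2}`) and `Q = (I − A*A)^{1/2}`
(with inverse `Qinv`), the Möbius map
`η(Z) = (I − AA*)^{−1/2}(Z + A)(I + A*Z)⁻¹(I − A*A)^{1/2}` maps `𝓑` bijectively onto `𝓑`,
with inverse `η⁻¹(Z) = (I − AA*)^{−1/2}(Z − A)(I − A*Z)⁻¹(I − A*A)^{1/2}`. -/
theorem mobius_map_biject
    {H K : Type*} [NormedAddCommGroup H] [InnerProductSpace ℂ H] [CompleteSpace H]
    [NormedAddCommGroup K] [InnerProductSpace ℂ K] [CompleteSpace K]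
    (A : K →L[ℂ] H) (hA : ‖A‖ < 1)
    (P Pinv : H →L[ℂ] H) (hP : P.IsPositive) (hP2 : P ∘L P = 1 - A ∘L adjoint A)
    (hPinv₁ : P ∘L Pinv = 1) (hPinv₂ : Pinv ∘L P = 1)
    (Q : K →L[ℂ] K) (hQ : Q.IsPositive) (hQ2 : Q ∘L Q = 1 - adjoint A ∘L A) :
    (∀ Z : K →L[ℂ] H, ‖Z‖ < 1 →
        ‖Pinv ∘L (Z + A) ∘L Ring.inverse (1 + adjoint A ∘L Z) ∘L Q‖ < 1) ∧
    (∀ Z : K →L[ℂ] H, ‖Z‖ < 1 →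
        ‖Pinv ∘L (Z - A) ∘L Ring.inverse (1 - adjoint A ∘L Z) ∘L Q‖ < 1) ∧
    (∀ Z : K →L[ℂ] H, ‖Z‖ < 1 →
        Pinv ∘L ((Pinv ∘L (Z - A) ∘L Ring.inverse (1 - adjoint A ∘L Z) ∘L Q) + A) ∘L
            Ring.inverse (1 + adjoint A ∘L
              (Pinv ∘L (Z - A) ∘L Ring.inverse (1 - adjoint A ∘L Z) ∘L Q)) ∘L Q = Z) ∧
    (∀ Z : K →L[ℂ] H, ‖Z‖ < 1 →
        Pinv ∘L ((Pinv ∘L (Z + A) ∘L Ring.inverse (1 + adjoint A ∘L Z) ∘L Q) - A) ∘L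
            Ring.inverse (1 - adjoint A ∘L
              (Pinv ∘L (Z + A) ∘L Ring.inverse (1 + adjoint A ∘L Z) ∘L Q)) ∘L Q = Z) := by
  have hA' : ‖-A‖ < 1 := by rwa [norm_neg]
  have h1 : P ∘L P = 1 - (-A) ∘L adjoint (-A) := by rw [hP2]; ext x; simp
  have h2 : Q ∘L Q = 1 - adjoint (-A) ∘L (-A) := by rw [hQ2]; ext x; simp
  have hp := fun Z hZ => mobius_aux_main A hA P Pinv hP hP2 hPinv₁ hPinv₂ Q hQ hQ2 Z hZ
  have hm := fun Z hZ => mobius_aux_main (-A) hA' P Pinv hP h1 hPinv₁ hPinv₂ Q hQ h2 Z hZ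
  simp only [map_neg, neg_comp, sub_neg_eq_add, ← sub_eq_add_neg] at hm
  exact ⟨fun Z hZ => (hp Z hZ).1, fun Z hZ => (hm Z hZ).1, fun Z hZ => (hm Z hZ).2,
    fun Z hZ => (hp Z hZ).2⟩
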